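/- There exists a constant C > 0, depending only on the solution, such that |A(R,θ) e^{2U(R,θ)}| ≤ C e^{C R^{1/2}} for all R ≥ R₀ and all θ ∈ ℝ. -/

import Mathlib

open Real MeasureTheory Set

/-- Partial derivative with respect to the first (time) variable `R`. -/
noncomputable def pdR (f : ℝ → ℝ → ℝ) (R θ : ℝ) : ℝ := deriv (fun r => f r θ) R

/-- Partial derivative with respect to the second (space) variable `θ`. -/
noncomputable def pdT (f : ℝ → ℝ → ℝ) (R θ : ℝ) : ℝ := deriv (fun t => f R t) θ

abbrev Sm (f : ℝ → ℝ → ℝ) : Prop := ContDiff ℝ (⊤ : ℕ∞) (Function.uncurry f)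

lemma hasR {f : ℝ → ℝ → ℝ} (hf : Sm f) (t θ : ℝ) :
    HasDerivAt (fun r => f r θ) (pdR f t θ) t := by
  have h : Differentiable ℝ (fun r => f r θ) := by
    have : (fun r => f r θ) = (Function.uncurry f) ∘ (fun r => (r, θ)) := rfl
    rw [this]
    exact (hf.differentiable (by simp)).comp (by fun_prop)
  exact (h t).hasDerivAt

lemma hasT {f : ℝ → ℝ → ℝ} (hf : Sm f) (t θ : ℝ) :
    HasDerivAt (fun r => f t r) (pdT f t θ) θ := by
  have h : Differentiable ℝ (fun r => f t r) := by
    have : (fun r => f t r) = (Function.uncurry f) ∘ (fun r => (t, r)) := rfl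
    rw [this]
    exact (hf.differentiable (by simp)).comp (by fun_prop)
  exact (h θ).hasDerivAt

lemma pdR_eq {f : ℝ → ℝ → ℝ} (hf : Sm f) (t θ : ℝ) :
    pdR f t θ = fderiv ℝ (Function.uncurry f) (t, θ) (1, 0) := by
  have h1 := ((hf.differentiable (by simp)) (t, θ)).hasFDerivAt
  have h2 : HasDerivAt (fun r : ℝ => (r, θ)) ((1 : ℝ), (0 : ℝ)) t :=
    (hasDerivAt_id t).prodMk (hasDerivAt_const t θ)
  have h3 := h1.comp_hasDerivAt t h2
  exact (hasR hf t θ).unique h3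

lemma pdT_eq {f : ℝ → ℝ → ℝ} (hf : Sm f) (t θ : ℝ) :
    pdT f t θ = fderiv ℝ (Function.uncurry f) (t, θ) (0, 1) := by
  have h1 := ((hf.differentiable (by simp)) (t, θ)).hasFDerivAt
  have h2 : HasDerivAt (fun r : ℝ => (t, r)) ((0 : ℝ), (1 : ℝ)) θ :=
    (hasDerivAt_const θ t).prodMk (hasDerivAt_id θ)
  have h3 := h1.comp_hasDerivAt θ h2
  exact (hasT hf t θ).unique h3

lemma smR {f : ℝ → ℝ → ℝ} (hf : Sm f) : Sm (pdR f) := by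
  have : Function.uncurry (pdR f) = fun x => fderiv ℝ (Function.uncurry f) x (1, 0) := by
    ext ⟨t, θ⟩; exact pdR_eq hf t θ
  rw [Sm, this]
  exact (hf.fderiv_right (m := (⊤ : ℕ∞)) (by simp)).clm_apply contDiff_const

lemma smT {f : ℝ → ℝ → ℝ} (hf : Sm f) : Sm (pdT f) := by
  have : Function.uncurry (pdT f) = fun x => fderiv ℝ (Function.uncurry f) x (0, 1) := by
    ext ⟨t, θ⟩; exact pdT_eq hf t θ
  rw [Sm, this]
  exact (hf.fderiv_right (m := (⊤ : ℕ∞)) (by simp)).clm_apply contDiff_const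

lemma pd_comm {f : ℝ → ℝ → ℝ} (hf : Sm f) (t θ : ℝ) :
    pdR (pdT f) t θ = pdT (pdR f) t θ := by
  have e1 : Function.uncurry (pdR f) = fun x => fderiv ℝ (Function.uncurry f) x (1, 0) := by
    ext ⟨t, θ⟩; exact pdR_eq hf t θ
  have e2 : Function.uncurry (pdT f) = fun x => fderiv ℝ (Function.uncurry f) x (0, 1) := by
    ext ⟨t, θ⟩; exact pdT_eq hf t θ
  rw [pdR_eq (smT hf), pdT_eq (smR hf), e1, e2]
  have hd : DifferentiableAt ℝ (fderiv ℝ (Function.uncurry f)) (t, θ) :=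
    ((hf.fderiv_right (m := (⊤ : ℕ∞)) (by simp)).differentiable (by simp)) _
  have hs : IsSymmSndFDerivAt ℝ (Function.uncurry f) (t, θ) :=
    hf.contDiffAt.isSymmSndFDerivAt (by simp; exact WithTop.coe_le_coe.2 (le_top : (2 : ℕ∞) ≤ ⊤))
  rw [fderiv_clm_apply hd (by fun_prop), fderiv_clm_apply hd (by fun_prop)]
  simp
  exact hs _ _

lemma perR {f : ℝ → ℝ → ℝ} (hp : ∀ R θ, f R (θ + 2 * π) = f R θ) :
    ∀ R θ, pdR f R (θ + 2 * π) = pdR f R θ := by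
  intro R θ; simp only [pdR, hp]

lemma perT {f : ℝ → ℝ → ℝ} (hp : ∀ R θ, f R (θ + 2 * π) = f R θ) :
    ∀ R θ, pdT f R (θ + 2 * π) = pdT f R θ := by
  intro R θ; simp only [pdT]
  rw [← deriv_comp_add_const]
  simp only [hp]

noncomputable def II (f : ℝ → ℝ → ℝ) (t : ℝ) : ℝ := ∫ θ in (0:ℝ)..(2 * π), f t θ

lemma contT {f : ℝ → ℝ → ℝ} (hf : Sm f) (t : ℝ) : Continuous (fun θ => f t θ) := by
  have : (fun r => f t r) = (Function.uncurry f) ∘ (fun r => (t, r)) := rfl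
  rw [this]
  exact hf.continuous.comp (by fun_prop)

lemma intT {f : ℝ → ℝ → ℝ} (hf : Sm f) (t : ℝ) (a b : ℝ) :
    IntervalIntegrable (fun θ => f t θ) volume a b := (contT hf t).intervalIntegrable _ _

lemma hasII {f : ℝ → ℝ → ℝ} (hf : Sm f) (t : ℝ) :
    HasDerivAt (II f) (II (pdR f) t) t := by
  have hcomp : IsCompact (Metric.closedBall t 1 ×ˢ uIcc (0:ℝ) (2 * π)) :=
    (isCompact_closedBall _ _).prod isCompact_uIcc
  obtain ⟨M, hM⟩ := hcomp.exists_bound_of_continuousOn (smR hf).continuous.continuousOn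
  have := intervalIntegral.hasDerivAt_integral_of_dominated_loc_of_deriv_le (μ := volume)
    (F := f) (F' := pdR f) (x₀ := t) (a := 0) (b := 2 * π) (bound := fun _ => M)
    (s := Metric.closedBall t 1) (Metric.closedBall_mem_nhds t one_pos)
    (Filter.Eventually.of_forall fun x => (contT hf x).aestronglyMeasurable)
    (intT hf t _ _) (contT (smR hf) t).aestronglyMeasurable
    (Filter.Eventually.of_forall fun x hx y hy => hM (y, x) ⟨hy, uIoc_subset_uIcc hx⟩)
    (by simp)
    (Filter.Eventually.of_forall fun x hx y hy => hasR hf y x)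
  exact this.2

lemma II_dT {f : ℝ → ℝ → ℝ} (hf : Sm f) (hp : ∀ R θ, f R (θ + 2 * π) = f R θ) (t : ℝ) :
    II (pdT f) t = 0 := by
  unfold II
  rw [intervalIntegral.integral_eq_sub_of_hasDerivAt (fun x _ => hasT hf t x) (intT (smT hf) t _ _)]
  have := hp t 0
  rw [zero_add] at this
  rw [this, sub_self]

/-! fixed time inequalities -/

lemma cs {f : ℝ → ℝ} (hf : Continuous f) {c : ℝ} (hc : 0 ≤ c)
    (h : 2 * π * (∫ θ in (0:ℝ)..(2 * π), f θ ^ 2) ≤ c ^ 2) :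
    (∫ θ in (0:ℝ)..(2 * π), |f θ|) ≤ c := by
  have hpi := Real.pi_pos
  set J := ∫ θ in (0:ℝ)..(2 * π), |f θ| with hJ
  set m := J / (2 * π) with hm
  have h0 : 0 ≤ ∫ θ in (0:ℝ)..(2 * π), (|f θ| - m) ^ 2 :=
    intervalIntegral.integral_nonneg (by positivity) (fun _ _ => sq_nonneg _)
  have h1 : (∫ θ in (0:ℝ)..(2 * π), (|f θ| - m) ^ 2)
      = (∫ θ in (0:ℝ)..(2 * π), f θ ^ 2) - 2 * m * J + m ^ 2 * (2 * π) := by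
    have : ∀ θ, (|f θ| - m) ^ 2 = f θ ^ 2 - 2 * m * |f θ| + m ^ 2 := by
      intro θ; rw [sub_sq, sq_abs]; ring
    simp only [this]
    have i1 : IntervalIntegrable (fun θ => f θ ^ 2) volume 0 (2*π) :=
      Continuous.intervalIntegrable (by fun_prop) _ _
    have i2 : IntervalIntegrable (fun θ => 2 * m * |f θ|) volume 0 (2*π) :=
      Continuous.intervalIntegrable (by fun_prop) _ _
    rw [intervalIntegral.integral_add (i1.sub i2) (by simp), intervalIntegral.integral_sub i1 i2,
      intervalIntegral.integral_const_mul, ← hJ]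
    simp; ring
  rw [h1] at h0
  have h2 : J = m * (2 * π) := by rw [hm]; field_simp
  have h3 : J ^ 2 ≤ c ^ 2 := by
    have : (2 * π) * (m ^ 2 * (2 * π)) ≤ c ^ 2 := by
      refine le_trans ?_ h
      apply mul_le_mul_of_nonneg_left _ (by positivity)
      have : 2 * m * J = 2 * (m ^ 2 * (2 * π)) := by rw [h2]; ring
      linarith
    rw [h2]; nlinarith
  exact abs_le_of_sq_le_sq' h3 hc |>.2

lemma osc {f f' : ℝ → ℝ} (hf : ∀ x, HasDerivAt f (f' x) x) (hc : Continuous f')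
    {x y : ℝ} (hx : x ∈ Icc 0 (2 * π)) (hy : y ∈ Icc 0 (2 * π)) :
    |f x - f y| ≤ ∫ θ in (0:ℝ)..(2 * π), |f' θ| := by
  wlog hxy : y ≤ x generalizing x y
  · rw [abs_sub_comm]; exact this hy hx (le_of_not_ge hxy)
  rw [← intervalIntegral.integral_eq_sub_of_hasDerivAt (fun x _ => hf x)
    (hc.intervalIntegrable y x)]
  refine (intervalIntegral.abs_integral_le_integral_abs hxy).trans ?_
  exact intervalIntegral.integral_mono_interval hy.1 hxy hx.2
    (Filter.Eventually.of_forall fun _ => abs_nonneg _) (hc.abs.intervalIntegrable _ _)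

structure Sol (P Q : ℝ → ℝ → ℝ) (t0 : ℝ) : Prop where
  sP : Sm P
  sQ : Sm Q
  pP : ∀ R θ, P R (θ + 2 * π) = P R θ
  pQ : ∀ R θ, Q R (θ + 2 * π) = Q R θ
  eP : ∀ t, t0 ≤ t → ∀ θ, pdR (pdR P) t θ = exp (2 * t) * pdT (pdT P) t θ
    + exp (2 * P t θ) * (pdR Q t θ ^ 2 - exp (2 * t) * pdT Q t θ ^ 2)
  eQ : ∀ t, t0 ≤ t → ∀ θ, pdR (pdR Q) t θ = exp (2 * t) * pdT (pdT Q) t θ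
    - 2 * (pdR P t θ * pdR Q t θ - exp (2 * t) * (pdT P t θ * pdT Q t θ))

lemma sm_id {f : ℝ → ℝ → ℝ} (hf : Sm f) :
    ContDiff ℝ (⊤ : ℕ∞) (fun x : ℝ × ℝ => f x.1 x.2) := hf

lemma sm_of {f : ℝ → ℝ → ℝ} (hf : ContDiff ℝ (⊤ : ℕ∞) (fun x : ℝ × ℝ => f x.1 x.2)) : Sm f := hf

lemma II_congr {f g : ℝ → ℝ → ℝ} {t : ℝ} (h : ∀ θ, f t θ = g t θ) : II f t = II g t := by
  unfold II; simp only [h]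

lemma II_add {f g : ℝ → ℝ → ℝ} (hf : Sm f) (hg : Sm g) (t : ℝ) :
    II (fun t θ => f t θ + g t θ) t = II f t + II g t :=
  intervalIntegral.integral_add (intT hf t _ _) (intT hg t _ _)

lemma II_sub {f g : ℝ → ℝ → ℝ} (hf : Sm f) (hg : Sm g) (t : ℝ) :
    II (fun t θ => f t θ - g t θ) t = II f t - II g t :=
  intervalIntegral.integral_sub (intT hf t _ _) (intT hg t _ _)

lemma II_mul {f : ℝ → ℝ → ℝ} (c : ℝ → ℝ) (t : ℝ) :
    II (fun t θ => c t * f t θ) t = c t * II f t :=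
  intervalIntegral.integral_const_mul _ _

lemma II_mono {f g : ℝ → ℝ → ℝ} (hf : Sm f) (hg : Sm g) (t : ℝ)
    (h : ∀ θ ∈ Icc 0 (2 * π), f t θ ≤ g t θ) : II f t ≤ II g t :=
  intervalIntegral.integral_mono_on (by positivity) (intT hf t _ _) (intT hg t _ _) h

noncomputable def aa (P : ℝ → ℝ → ℝ) : ℝ → ℝ := II (fun t θ => pdR P t θ ^ 2)
noncomputable def bb (P Q : ℝ → ℝ → ℝ) : ℝ → ℝ := II (fun t θ => exp (2 * P t θ) * pdR Q t θ ^ 2)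
noncomputable def cc (P : ℝ → ℝ → ℝ) : ℝ → ℝ := II (fun t θ => pdT P t θ ^ 2)
noncomputable def dd (P Q : ℝ → ℝ → ℝ) : ℝ → ℝ := II (fun t θ => exp (2 * P t θ) * pdT Q t θ ^ 2)
noncomputable def HH (P Q : ℝ → ℝ → ℝ) (t : ℝ) : ℝ :=
  exp (-2 * t) * (aa P t + bb P Q t) + cc P t + dd P Q t
noncomputable def G1 (P : ℝ → ℝ → ℝ) (t : ℝ) : ℝ :=
  II (fun t θ => P t θ * pdR P t θ) t - II P t * II (pdR P) t / (2 * π)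
noncomputable def G2 (P Q : ℝ → ℝ → ℝ) (t : ℝ) : ℝ :=
  II (fun t θ => exp (2 * P t θ) * pdR Q t θ * Q t θ) t
    - II Q t * II (fun t θ => exp (2 * P t θ) * pdR Q t θ) t / (2 * π)

lemma derivH {P Q : ℝ → ℝ → ℝ} {t0 : ℝ} (s : Sol P Q t0) {t : ℝ} (ht : t0 ≤ t) :
    HasDerivAt (HH P Q) (-2 * exp (-2 * t) * (aa P t + bb P Q t)) t := by
  have sP := sm_id s.sP
  have sQ := sm_id s.sQ
  have sPt := sm_id (smR s.sP)
  have sQt := sm_id (smR s.sQ)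
  have sPx := sm_id (smT s.sP)
  have sQx := sm_id (smT s.sQ)
  have ka : Sm (fun t θ => pdR P t θ ^ 2) := sm_of (by fun_prop)
  have kb : Sm (fun t θ => exp (2 * P t θ) * pdR Q t θ ^ 2) := sm_of (by fun_prop)
  have kc : Sm (fun t θ => pdT P t θ ^ 2) := sm_of (by fun_prop)
  have kd : Sm (fun t θ => exp (2 * P t θ) * pdT Q t θ ^ 2) := sm_of (by fun_prop)
  have he : HasDerivAt (fun t : ℝ => exp (-2 * t)) (exp (-2 * t) * (-2 * 1)) t :=
    ((hasDerivAt_id t).const_mul (-2)).exp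
  have h := (((he.mul ((hasII ka t).add (hasII kb t))).add (hasII kc t)).add (hasII kd t))
  have hf : Sm (fun t θ => 2 * (pdR P t θ * pdT P t θ
      + exp (2 * P t θ) * (pdR Q t θ * pdT Q t θ))) := sm_of (by fun_prop)
  have hz := II_dT hf (by intro R θ; simp only [s.pP, perR s.pP, perR s.pQ, perT s.pP, perT s.pQ]) t
  have key : exp (-2 * t) * (II (pdR (fun t θ => pdR P t θ ^ 2)) t
      + II (pdR (fun t θ => exp (2 * P t θ) * pdR Q t θ ^ 2)) t)
      + II (pdR (fun t θ => pdT P t θ ^ 2)) t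
      + II (pdR (fun t θ => exp (2 * P t θ) * pdT Q t θ ^ 2)) t = 0 := by
    rw [← hz, ← II_add (smR ka) (smR kb), ← II_mul (fun t => exp (-2 * t)), ← II_add, ← II_add]
    · apply II_congr
      intro θ
      have ep := fun x => (((hasR s.sP t x).const_mul 2).exp)
      have ex := (((hasT s.sP t θ).const_mul 2).exp)
      have e1 : pdR (fun t θ => pdR P t θ ^ 2) t θ = _ := ((hasR (smR s.sP) t θ).pow 2).deriv
      have e2 : pdR (fun t θ => exp (2 * P t θ) * pdR Q t θ ^ 2) t θ = _ :=
        ((ep θ).mul ((hasR (smR s.sQ) t θ).pow 2)).deriv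
      have e3 : pdR (fun t θ => pdT P t θ ^ 2) t θ = _ := ((hasR (smT s.sP) t θ).pow 2).deriv
      have e4 : pdR (fun t θ => exp (2 * P t θ) * pdT Q t θ ^ 2) t θ = _ :=
        ((ep θ).mul ((hasR (smT s.sQ) t θ).pow 2)).deriv
      have e5 : pdT (fun t θ => 2 * (pdR P t θ * pdT P t θ
        + exp (2 * P t θ) * (pdR Q t θ * pdT Q t θ))) t θ = _ :=
        ((((hasT (smR s.sP) t θ).mul (hasT (smT s.sP) t θ)).add
          (ex.mul ((hasT (smR s.sQ) t θ).mul (hasT (smT s.sQ) t θ)))).const_mul 2).deriv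
      simp only [e1, e2, e3, e4, e5, s.eP t ht, s.eQ t ht, pd_comm s.sP, pd_comm s.sQ]
      have hE : exp (-2 * t) * exp (2 * t) = 1 := by rw [← exp_add]; simp
      generalize exp (-2 * t) = E1 at hE ⊢
      generalize exp (2 * t) = E2 at hE ⊢
      simp only [Nat.cast_ofNat, Nat.add_one_sub_one, pow_one, Pi.pow_apply, Pi.mul_apply]
      linear_combination (2 * (pdR P t θ * pdT (pdT P) t θ - pdR P t θ * exp (2 * P t θ) * pdT Q t θ ^ 2
        + exp (2 * P t θ) * pdR Q t θ * pdT (pdT Q) t θ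
        + 2 * exp (2 * P t θ) * pdT P t θ * pdT Q t θ * pdR Q t θ)) * hE
    all_goals
      have := sm_id (smR ka)
      have := sm_id (smR kb)
      have := sm_id (smR kc)
      have := sm_id (smR kd)
      exact sm_of (by fun_prop)
  refine h.congr_deriv ?_
  change exp (-2 * t) * (-2 * 1) * (aa P t + bb P Q t) + exp (-2 * t) * _ + _ + _ = _
  linarith

lemma derivG1 {P Q : ℝ → ℝ → ℝ} {t0 : ℝ} (s : Sol P Q t0) {t : ℝ} (ht : t0 ≤ t) :
    HasDerivAt (G1 P) (aa P t - II (pdR P) t ^ 2 / (2 * π) - exp (2 * t) * cc P t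
      + II (fun t θ => (P t θ - II P t / (2 * π)) *
        (exp (2 * P t θ) * (pdR Q t θ ^ 2 - exp (2 * t) * pdT Q t θ ^ 2))) t) t := by
  have sP := sm_id s.sP
  have sQ := sm_id s.sQ
  have sPt := sm_id (smR s.sP)
  have sQt := sm_id (smR s.sQ)
  have sPx := sm_id (smT s.sP)
  have sPxx := sm_id (smT (smT s.sP))
  have sPtt := sm_id (smR (smR s.sP))
  have sQx := sm_id (smT s.sQ)
  have k1 : Sm (fun t θ => P t θ * pdR P t θ) := sm_of (by fun_prop)
  have ka : Sm (fun t θ => pdR P t θ ^ 2) := sm_of (by fun_prop)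
  have kc : Sm (fun t θ => pdT P t θ ^ 2) := sm_of (by fun_prop)
  have h := (hasII k1 t).sub (((hasII s.sP t).mul (hasII (smR s.sP) t)).div_const (2 * π))
  refine h.congr_deriv ?_
  generalize hm : II P t / (2 * π) = m
  have hf : Sm (fun t θ => (P t θ - m) * pdT P t θ) := sm_of (by fun_prop)
  have hz := II_dT hf (by intro R θ; simp only [s.pP, perT s.pP]) t
  have e2 : II (pdT (fun t θ => (P t θ - m) * pdT P t θ)) t
     = cc P t + II (fun t θ => (P t θ - m) * pdT (pdT P) t θ) t := by
    rw [cc, ← II_add kc (sm_of (by fun_prop))]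
    apply II_congr
    intro θ
    have : pdT (fun t θ => (P t θ - m) * pdT P t θ) t θ = _ :=
      (((hasT s.sP t θ).sub_const m).mul (hasT (smT s.sP) t θ)).deriv
    rw [this]; ring
  have e1 : II (pdR (fun t θ => P t θ * pdR P t θ)) t
     = aa P t + II (fun t θ => P t θ * pdR (pdR P) t θ) t := by
    rw [aa, ← II_add ka (sm_of (by fun_prop))]
    apply II_congr
    intro θ
    have : pdR (fun t θ => P t θ * pdR P t θ) t θ = _ :=
      ((hasR s.sP t θ).mul (hasR (smR s.sP) t θ)).deriv
    rw [this]; ring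
  have e3 : II (fun t θ => P t θ * pdR (pdR P) t θ) t
      = m * II (pdR (pdR P)) t + exp (2 * t) * II (fun t θ => (P t θ - m) * pdT (pdT P) t θ) t
       + II (fun t θ => (P t θ - m) *
        (exp (2 * P t θ) * (pdR Q t θ ^ 2 - exp (2 * t) * pdT Q t θ ^ 2))) t := by
    rw [← II_mul (fun _ => m), ← II_mul (fun t => exp (2 * t)), ← II_add, ← II_add]
    · apply II_congr
      intro θ
      simp only [s.eP t ht]
      ring
    all_goals exact sm_of (by fun_prop)
  rw [e1, e3]
  rw [e2] at hz
  have e4 : II (fun t θ => (P t θ - II P t / (2 * π)) *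
        (exp (2 * P t θ) * (pdR Q t θ ^ 2 - exp (2 * t) * pdT Q t θ ^ 2))) t = 
     II (fun t θ => (P t θ - m) *
        (exp (2 * P t θ) * (pdR Q t θ ^ 2 - exp (2 * t) * pdT Q t θ ^ 2))) t := by
    apply II_congr
    intro θ; simp only [hm]
  rw [e4]
  have hm' : II P t * II (pdR (pdR P)) t / (2 * π) = m * II (pdR (pdR P)) t := by rw [← hm]; ring
  have : II (fun t θ => (P t θ - m) * pdT (pdT P) t θ) t = - cc P t := by linarith
  rw [this, add_div, hm']
  ring

lemma derivG2 {P Q : ℝ → ℝ → ℝ} {t0 : ℝ} (s : Sol P Q t0) {t : ℝ} (ht : t0 ≤ t) :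
    HasDerivAt (G2 P Q) (bb P Q t - II (pdR Q) t * II (fun t θ => exp (2 * P t θ) * pdR Q t θ) t / (2 * π)
      - exp (2 * t) * dd P Q t) t := by
  have sP := sm_id s.sP
  have sQ := sm_id s.sQ
  have sPt := sm_id (smR s.sP)
  have sQt := sm_id (smR s.sQ)
  have sPx := sm_id (smT s.sP)
  have sQx := sm_id (smT s.sQ)
  have k1 : Sm (fun t θ => exp (2 * P t θ) * pdR Q t θ * Q t θ) := sm_of (by fun_prop)
  have k2 : Sm (fun t θ => exp (2 * P t θ) * pdR Q t θ) := sm_of (by fun_prop)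
  have k3 : Sm (fun t θ => exp (2 * P t θ) * pdT Q t θ) := sm_of (by fun_prop)
  have k3' := sm_id (smT k3)
  have k4 : Sm (fun t θ => exp (2 * P t θ) * pdT Q t θ * Q t θ) := sm_of (by fun_prop)
  have kb : Sm (fun t θ => exp (2 * P t θ) * pdR Q t θ ^ 2) := sm_of (by fun_prop)
  have kd : Sm (fun t θ => exp (2 * P t θ) * pdT Q t θ ^ 2) := sm_of (by fun_prop)
  have h := (hasII k1 t).sub (((hasII s.sQ t).mul (hasII k2 t)).div_const (2 * π))
  refine h.congr_deriv ?_
  have wave : ∀ θ, pdR (fun t θ => exp (2 * P t θ) * pdR Q t θ) t θ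
      = exp (2 * t) * pdT (fun t θ => exp (2 * P t θ) * pdT Q t θ) t θ := by
    intro θ
    have e1 : pdR (fun t θ => exp (2 * P t θ) * pdR Q t θ) t θ = _ :=
      (((hasR s.sP t θ).const_mul 2).exp.mul (hasR (smR s.sQ) t θ)).deriv
    have e2 : pdT (fun t θ => exp (2 * P t θ) * pdT Q t θ) t θ = _ :=
      (((hasT s.sP t θ).const_mul 2).exp.mul (hasT (smT s.sQ) t θ)).deriv
    rw [e1, e2, s.eQ t ht]; ring
  have z1 := II_dT k3 (by intro R θ; simp only [s.pP, perT s.pQ]) t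
  have z2 := II_dT k4 (by intro R θ; simp only [s.pP, s.pQ, perT s.pQ]) t
  have f1 : II (pdR (fun t θ => exp (2 * P t θ) * pdR Q t θ)) t = 0 := by
    rw [II_congr (g := fun t θ => exp (2 * t) * pdT (fun t θ => exp (2 * P t θ) * pdT Q t θ) t θ) wave,
      II_mul (fun t => exp (2 * t)), z1, mul_zero]
  have f2 : II (pdT (fun t θ => exp (2 * P t θ) * pdT Q t θ * Q t θ)) t
      = dd P Q t + II (fun t θ => pdT (fun t θ => exp (2 * P t θ) * pdT Q t θ) t θ * Q t θ) t := by
    rw [dd, ← II_add kd (sm_of (by fun_prop))]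
    apply II_congr
    intro θ
    have : pdT (fun t θ => exp (2 * P t θ) * pdT Q t θ * Q t θ) t θ = _ :=
      ((hasT k3 t θ).mul (hasT s.sQ t θ)).deriv
    rw [this]; ring
  have f3 : II (pdR (fun t θ => exp (2 * P t θ) * pdR Q t θ * Q t θ)) t
      = bb P Q t + exp (2 * t) * II (fun t θ => pdT (fun t θ => exp (2 * P t θ) * pdT Q t θ) t θ * Q t θ) t := by
    rw [bb, ← II_mul (fun t => exp (2 * t)), ← II_add kb (sm_of (by fun_prop))]
    apply II_congr
    intro θ
    have : pdR (fun t θ => exp (2 * P t θ) * pdR Q t θ * Q t θ) t θ = _ :=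
      ((hasR k2 t θ).mul (hasR s.sQ t θ)).deriv
    rw [this, wave]; ring
  rw [f3, f1]
  have : II (fun t θ => pdT (fun t θ => exp (2 * P t θ) * pdT Q t θ) t θ * Q t θ) t = - dd P Q t := by
    linarith
  rw [this]
  ring

lemma aa_nn (P : ℝ → ℝ → ℝ) (t : ℝ) : 0 ≤ aa P t :=
  intervalIntegral.integral_nonneg (by positivity) (fun _ _ => by positivity)
lemma bb_nn (P Q : ℝ → ℝ → ℝ) (t : ℝ) : 0 ≤ bb P Q t :=
  intervalIntegral.integral_nonneg (by positivity) (fun _ _ => by positivity)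
lemma cc_nn (P : ℝ → ℝ → ℝ) (t : ℝ) : 0 ≤ cc P t :=
  intervalIntegral.integral_nonneg (by positivity) (fun _ _ => by positivity)
lemma dd_nn (P Q : ℝ → ℝ → ℝ) (t : ℝ) : 0 ≤ dd P Q t :=
  intervalIntegral.integral_nonneg (by positivity) (fun _ _ => by positivity)
lemma HH_nn (P Q : ℝ → ℝ → ℝ) (t : ℝ) : 0 ≤ HH P Q t := by
  have := aa_nn P t
  have := bb_nn P Q t
  have := cc_nn P t
  have := dd_nn P Q t
  unfold HH; positivity

lemma HH_mul (P Q : ℝ → ℝ → ℝ) (t : ℝ) :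
    exp (2 * t) * HH P Q t = aa P t + bb P Q t + exp (2 * t) * cc P t + exp (2 * t) * dd P Q t := by
  have hE : exp (2 * t) * exp (-2 * t) = 1 := by rw [← exp_add]; simp
  unfold HH
  linear_combination (aa P t + bb P Q t) * hE

lemma cc_le (P Q : ℝ → ℝ → ℝ) (t : ℝ) : cc P t ≤ HH P Q t := by
  have h1 := aa_nn P t
  have h2 := bb_nn P Q t
  have := dd_nn P Q t
  have : 0 ≤ exp (-2 * t) * (aa P t + bb P Q t) := by positivity
  unfold HH; linarith

lemma dd_le (P Q : ℝ → ℝ → ℝ) (t : ℝ) : dd P Q t ≤ HH P Q t := by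
  have h1 := aa_nn P t
  have h2 := bb_nn P Q t
  have := cc_nn P t
  have : 0 ≤ exp (-2 * t) * (aa P t + bb P Q t) := by positivity
  unfold HH; linarith

lemma aa_le (P Q : ℝ → ℝ → ℝ) (t : ℝ) : aa P t ≤ exp (2 * t) * HH P Q t := by
  have h2 := bb_nn P Q t
  have := cc_nn P t
  have := dd_nn P Q t
  rw [HH_mul]
  have : 0 ≤ exp (2 * t) * cc P t := by positivity
  have : 0 ≤ exp (2 * t) * dd P Q t := by positivity
  linarith

lemma bb_le (P Q : ℝ → ℝ → ℝ) (t : ℝ) : bb P Q t ≤ exp (2 * t) * HH P Q t := by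
  have h2 := aa_nn P t
  have := cc_nn P t
  have := dd_nn P Q t
  rw [HH_mul]
  have : 0 ≤ exp (2 * t) * cc P t := by positivity
  have : 0 ≤ exp (2 * t) * dd P Q t := by positivity
  linarith

noncomputable def ww (P Q : ℝ → ℝ → ℝ) (t : ℝ) : ℝ := √(2 * π * HH P Q t)

lemma ww_nn (P Q : ℝ → ℝ → ℝ) (t : ℝ) : 0 ≤ ww P Q t := sqrt_nonneg _

lemma ww_sq (P Q : ℝ → ℝ → ℝ) (t : ℝ) : ww P Q t ^ 2 = 2 * π * HH P Q t := by
  have := HH_nn P Q t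
  exact sq_sqrt (by positivity)

lemma exp_two (x : ℝ) : exp (2 * x) = exp x ^ 2 := by
  rw [two_mul, exp_add, sq]

lemma int_Pt {P Q : ℝ → ℝ → ℝ} {t0 : ℝ} (s : Sol P Q t0) (t : ℝ) :
    (∫ θ in (0:ℝ)..(2 * π), |pdR P t θ|) ≤ exp t * ww P Q t := by
  have := ww_nn P Q t
  refine cs (contT (smR s.sP) t) (by positivity) ?_
  rw [mul_pow, ww_sq, ← exp_two]
  have h := aa_le P Q t
  have := mul_le_mul_of_nonneg_left h (by positivity : 0 ≤ 2 * π)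
  calc _ ≤ _ := this
    _ = _ := by ring

lemma int_Px {P Q : ℝ → ℝ → ℝ} {t0 : ℝ} (s : Sol P Q t0) (t : ℝ) :
    (∫ θ in (0:ℝ)..(2 * π), |pdT P t θ|) ≤ ww P Q t := by
  have := ww_nn P Q t
  refine cs (contT (smT s.sP) t) (by positivity) ?_
  rw [ww_sq]
  exact mul_le_mul_of_nonneg_left (cc_le P Q t) (by positivity : 0 ≤ 2 * π)

lemma int_Qt {P Q : ℝ → ℝ → ℝ} {t0 : ℝ} (s : Sol P Q t0) (t : ℝ) :
    (∫ θ in (0:ℝ)..(2 * π), exp (P t θ) * |pdR Q t θ|) ≤ exp t * ww P Q t := by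
  have := ww_nn P Q t
  have c1 := contT s.sP t
  have c2 := contT (smR s.sQ) t
  have := cs (f := fun θ => exp (P t θ) * pdR Q t θ) (by fun_prop)
    (c := exp t * ww P Q t) (by positivity) ?_
  · simpa only [abs_mul, abs_exp] using this
  rw [mul_pow, ww_sq, ← exp_two]
  have h := bb_le P Q t
  have := mul_le_mul_of_nonneg_left h (by positivity : 0 ≤ 2 * π)
  simp only [mul_pow, ← exp_two]
  calc _ ≤ _ := this
    _ = _ := by ring

lemma int_Qx {P Q : ℝ → ℝ → ℝ} {t0 : ℝ} (s : Sol P Q t0) (t : ℝ) :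
    (∫ θ in (0:ℝ)..(2 * π), exp (P t θ) * |pdT Q t θ|) ≤ ww P Q t := by
  have := ww_nn P Q t
  have c1 := contT s.sP t
  have c2 := contT (smT s.sQ) t
  have := cs (f := fun θ => exp (P t θ) * pdT Q t θ) (by fun_prop)
    (c := ww P Q t) (by positivity) ?_
  · simpa only [abs_mul, abs_exp] using this
  rw [ww_sq]
  have h := dd_le P Q t
  have := mul_le_mul_of_nonneg_left h (by positivity : 0 ≤ 2 * π)
  simp only [mul_pow, ← exp_two]
  exact this

lemma oscP {P Q : ℝ → ℝ → ℝ} {t0 : ℝ} (s : Sol P Q t0) (t : ℝ)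
    {x y : ℝ} (hx : x ∈ Icc 0 (2 * π)) (hy : y ∈ Icc 0 (2 * π)) :
    |P t x - P t y| ≤ ww P Q t :=
  (osc (fun x => hasT s.sP t x) (contT (smT s.sP) t) hx hy).trans (int_Px s t)

lemma exp_osc {P Q : ℝ → ℝ → ℝ} {t0 : ℝ} (s : Sol P Q t0) (t : ℝ)
    {x y : ℝ} (hx : x ∈ Icc 0 (2 * π)) (hy : y ∈ Icc 0 (2 * π)) :
    exp (P t x) ≤ exp (ww P Q t) * exp (P t y) := by
  rw [← exp_add]
  apply exp_le_exp.2
  have := (abs_le.1 (oscP s t hx hy)).2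
  linarith

lemma oscQ {P Q : ℝ → ℝ → ℝ} {t0 : ℝ} (s : Sol P Q t0) (t : ℝ)
    {x y z : ℝ} (hx : x ∈ Icc 0 (2 * π)) (hy : y ∈ Icc 0 (2 * π)) (hz : z ∈ Icc 0 (2 * π)) :
    |Q t x - Q t y| * exp (P t z) ≤ exp (ww P Q t) * ww P Q t := by
  have c1 := contT s.sP t
  have c2 := contT (smT s.sQ) t
  calc |Q t x - Q t y| * exp (P t z)
      ≤ (∫ θ in (0:ℝ)..(2 * π), |pdT Q t θ|) * exp (P t z) := by
        gcongr; exact osc (fun x => hasT s.sQ t x) (contT (smT s.sQ) t) hx hy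
    _ = ∫ θ in (0:ℝ)..(2 * π), |pdT Q t θ| * exp (P t z) := by
        rw [intervalIntegral.integral_mul_const]
    _ ≤ ∫ θ in (0:ℝ)..(2 * π), exp (ww P Q t) * (exp (P t θ) * |pdT Q t θ|) := by
        apply intervalIntegral.integral_mono_on (by positivity)
          (Continuous.intervalIntegrable (by fun_prop) _ _)
          (Continuous.intervalIntegrable (by fun_prop) _ _)
        intro θ hθ
        have := mul_le_mul_of_nonneg_left (exp_osc s t hz hθ) (abs_nonneg (pdT Q t θ))
        linarith
    _ = exp (ww P Q t) * ∫ θ in (0:ℝ)..(2 * π), (exp (P t θ) * |pdT Q t θ|) := by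
        rw [intervalIntegral.integral_const_mul]
    _ ≤ _ := by gcongr; exact int_Qx s t

lemma mean_bd {f : ℝ → ℝ → ℝ} (hf : Sm f) (t : ℝ) {B x : ℝ}
    (h : ∀ y ∈ Icc 0 (2 * π), |f t x - f t y| ≤ B) :
    |f t x - II f t / (2 * π)| ≤ B := by
  have hpi := Real.pi_pos
  have h1 : II f t ≤ ∫ θ in (0:ℝ)..(2 * π), (f t x + B) :=
    intervalIntegral.integral_mono_on (by positivity) (intT hf t _ _) (by simp)
      (fun y hy => by have := abs_le.1 (h y hy); linarith)
  have h2 : (∫ θ in (0:ℝ)..(2 * π), (f t x - B)) ≤ II f t :=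
    intervalIntegral.integral_mono_on (by positivity) (by simp) (intT hf t _ _)
      (fun y hy => by have := abs_le.1 (h y hy); linarith)
  simp at h1 h2
  rw [abs_le]
  constructor
  · have : II f t / (2 * π) ≤ f t x + B := by rw [div_le_iff₀ (by positivity)]; linarith
    linarith
  · have : f t x - B ≤ II f t / (2 * π) := by rw [le_div_iff₀ (by positivity)]; linarith
    linarith

lemma meanP {P Q : ℝ → ℝ → ℝ} {t0 : ℝ} (s : Sol P Q t0) (t : ℝ)
    {x : ℝ} (hx : x ∈ Icc 0 (2 * π)) : |P t x - II P t / (2 * π)| ≤ ww P Q t :=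
  mean_bd s.sP t (fun _ hy => oscP s t hx hy)

lemma meanQ {P Q : ℝ → ℝ → ℝ} {t0 : ℝ} (s : Sol P Q t0) (t : ℝ)
    {x z : ℝ} (hx : x ∈ Icc 0 (2 * π)) (hz : z ∈ Icc 0 (2 * π)) :
    |Q t x - II Q t / (2 * π)| * exp (P t z) ≤ exp (ww P Q t) * ww P Q t := by
  rw [← le_div_iff₀ (exp_pos _)]
  apply mean_bd s.sQ t
  intro y hy
  rw [le_div_iff₀ (exp_pos _)]
  exact oscQ s t hx hy hz

lemma G1_bd {P Q : ℝ → ℝ → ℝ} {t0 : ℝ} (s : Sol P Q t0) (t : ℝ) :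
    |G1 P t| ≤ exp t * (2 * π * HH P Q t) := by
  have c1 := contT s.sP t
  have c2 := contT (smR s.sP) t
  have e : G1 P t = ∫ θ in (0:ℝ)..(2 * π), (P t θ - II P t / (2 * π)) * pdR P t θ := by
    simp only [sub_mul]
    rw [intervalIntegral.integral_sub (Continuous.intervalIntegrable (by fun_prop) _ _)
      (Continuous.intervalIntegrable (by fun_prop) _ _), intervalIntegral.integral_const_mul]
    unfold G1
    rw [mul_div_right_comm]; rfl
  rw [e, ← ww_sq]
  calc _ ≤ ∫ θ in (0:ℝ)..(2 * π), |(P t θ - II P t / (2 * π)) * pdR P t θ| :=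
        intervalIntegral.abs_integral_le_integral_abs (by positivity)
    _ ≤ ∫ θ in (0:ℝ)..(2 * π), ww P Q t * |pdR P t θ| := by
        apply intervalIntegral.integral_mono_on (by positivity)
          (Continuous.intervalIntegrable (by fun_prop) _ _)
          (Continuous.intervalIntegrable (by fun_prop) _ _)
        intro θ hθ
        rw [abs_mul]
        gcongr
        exact meanP s t hθ
    _ = ww P Q t * ∫ θ in (0:ℝ)..(2 * π), |pdR P t θ| := by
        rw [intervalIntegral.integral_const_mul]
    _ ≤ ww P Q t * (exp t * ww P Q t) :=
        mul_le_mul_of_nonneg_left (int_Pt s t) (ww_nn _ _ _)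
    _ = _ := by ring

lemma G2_bd {P Q : ℝ → ℝ → ℝ} {t0 : ℝ} (s : Sol P Q t0) (t : ℝ) :
    |G2 P Q t| ≤ exp (ww P Q t) * (exp t * (2 * π * HH P Q t)) := by
  have c1 := contT s.sP t
  have c2 := contT (smR s.sQ) t
  have c3 := contT s.sQ t
  have e : G2 P Q t = ∫ θ in (0:ℝ)..(2 * π),
      (Q t θ - II Q t / (2 * π)) * (exp (2 * P t θ) * pdR Q t θ) := by
    simp only [sub_mul]
    rw [intervalIntegral.integral_sub (Continuous.intervalIntegrable (by fun_prop) _ _)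
      (Continuous.intervalIntegrable (by fun_prop) _ _), intervalIntegral.integral_const_mul]
    unfold G2
    rw [mul_div_right_comm]
    simp only [mul_comm (Q t _)]
    rfl
  rw [e, ← ww_sq]
  calc _ ≤ ∫ θ in (0:ℝ)..(2 * π), |(Q t θ - II Q t / (2 * π)) * (exp (2 * P t θ) * pdR Q t θ)| :=
        intervalIntegral.abs_integral_le_integral_abs (by positivity)
    _ ≤ ∫ θ in (0:ℝ)..(2 * π), (exp (ww P Q t) * ww P Q t) * (exp (P t θ) * |pdR Q t θ|) := by
        apply intervalIntegral.integral_mono_on (by positivity)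
          (Continuous.intervalIntegrable (by fun_prop) _ _)
          (Continuous.intervalIntegrable (by fun_prop) _ _)
        intro θ hθ
        rw [abs_mul, abs_mul, abs_exp, exp_two]
        have := mul_le_mul_of_nonneg_right (meanQ s t hθ hθ)
          (by positivity : 0 ≤ exp (P t θ) * |pdR Q t θ|)
        calc _ = _ := by ring
          _ ≤ _ := this
    _ = (exp (ww P Q t) * ww P Q t) * ∫ θ in (0:ℝ)..(2 * π), exp (P t θ) * |pdR Q t θ| := by
        rw [intervalIntegral.integral_const_mul]
    _ ≤ (exp (ww P Q t) * ww P Q t) * (exp t * ww P Q t) :=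
        mul_le_mul_of_nonneg_left (int_Qt s t) (mul_nonneg (exp_pos _).le (ww_nn _ _ _))
    _ = _ := by ring

lemma G1_err {P Q : ℝ → ℝ → ℝ} {t0 : ℝ} (s : Sol P Q t0) (t : ℝ) :
    II (fun t θ => (P t θ - II P t / (2 * π)) *
        (exp (2 * P t θ) * (pdR Q t θ ^ 2 - exp (2 * t) * pdT Q t θ ^ 2))) t
    ≤ ww P Q t * (bb P Q t + exp (2 * t) * dd P Q t) := by
  have c1 := contT s.sP t
  have c2 := contT (smR s.sQ) t
  have c3 := contT (smT s.sQ) t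
  have e : ww P Q t * (bb P Q t + exp (2 * t) * dd P Q t) = ∫ θ in (0:ℝ)..(2 * π),
      ww P Q t * (exp (2 * P t θ) * pdR Q t θ ^ 2 + exp (2 * t) * (exp (2 * P t θ) * pdT Q t θ ^ 2)) := by
    rw [intervalIntegral.integral_const_mul, intervalIntegral.integral_add
      (Continuous.intervalIntegrable (by fun_prop) _ _)
      (Continuous.intervalIntegrable (by fun_prop) _ _), intervalIntegral.integral_const_mul]
    rfl
  rw [e]
  apply intervalIntegral.integral_mono_on (by positivity)
          (Continuous.intervalIntegrable (by fun_prop) _ _)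
          (Continuous.intervalIntegrable (by fun_prop) _ _)
  intro θ hθ
  have h1 := abs_le.1 (meanP s t hθ)
  have n1 : 0 ≤ exp (2 * P t θ) * pdR Q t θ ^ 2 := by positivity
  have n2 : 0 ≤ exp (2 * t) * (exp (2 * P t θ) * pdT Q t θ ^ 2) := by positivity
  nlinarith [mul_le_mul_of_nonneg_right h1.2 n1, mul_le_mul_of_nonneg_right h1.1 n2]

lemma G2_err {P Q : ℝ → ℝ → ℝ} {t0 : ℝ} (s : Sol P Q t0) (t : ℝ) :
    - (II (pdR Q) t * II (fun t θ => exp (2 * P t θ) * pdR Q t θ) t / (2 * π))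
    ≤ exp (2 * ww P Q t) * (exp (2 * ww P Q t) - 1) * bb P Q t := by
  have hpi := Real.pi_pos
  have c1 := contT s.sP t
  have c2 := contT (smR s.sQ) t
  have h0 : (0:ℝ) ∈ Icc 0 (2 * π) := ⟨le_rfl, by positivity⟩
  have hw := ww_nn P Q t
  have hb := bb_nn P Q t
  generalize hm : P t 0 = m
  set J := II (pdR Q) t with hJ
  set J1 := ∫ θ in (0:ℝ)..(2 * π), |pdR Q t θ| with hJ1
  have hJJ : |J| ≤ J1 := intervalIntegral.abs_integral_le_integral_abs (by positivity)
  have hE : 0 ≤ exp (2 * ww P Q t) - 1 := by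
    have := one_le_exp (by positivity : 0 ≤ 2 * ww P Q t); linarith
  -- remainder
  have hr : |II (fun t θ => exp (2 * P t θ) * pdR Q t θ) t - exp (2 * m) * J|
      ≤ (exp (2 * ww P Q t) - 1) * exp (2 * m) * J1 := by
    have e : II (fun t θ => exp (2 * P t θ) * pdR Q t θ) t - exp (2 * m) * J
        = ∫ θ in (0:ℝ)..(2 * π), (exp (2 * P t θ) - exp (2 * m)) * pdR Q t θ := by
      simp only [sub_mul]
      rw [intervalIntegral.integral_sub (Continuous.intervalIntegrable (by fun_prop) _ _)
        (Continuous.intervalIntegrable (by fun_prop) _ _), intervalIntegral.integral_const_mul]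
      rfl
    rw [e, hJ1, ← intervalIntegral.integral_const_mul]
    refine (intervalIntegral.abs_integral_le_integral_abs (by positivity)).trans ?_
    apply intervalIntegral.integral_mono_on (by positivity)
          (Continuous.intervalIntegrable (by fun_prop) _ _)
          (Continuous.intervalIntegrable (by fun_prop) _ _)
    intro θ hθ
    rw [abs_mul]
    gcongr
    have h1 := abs_le.1 (oscP s t hθ h0)
    rw [hm] at h1
    have u1 : exp (2 * P t θ) ≤ exp (2 * ww P Q t) * exp (2 * m) := by
      rw [← exp_add]; apply exp_le_exp.2; linarith
    have u2 : exp (2 * m) * exp (- (2 * ww P Q t)) ≤ exp (2 * P t θ) := by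
      rw [← exp_add]; apply exp_le_exp.2; linarith
    have u3 : 2 ≤ exp (2 * ww P Q t) + exp (-(2 * ww P Q t)) := by
      have p1 := exp_pos (2 * ww P Q t)
      rw [exp_neg]
      generalize exp (2 * ww P Q t) = z at *
      have : z + z⁻¹ - 2 = (z - 1) ^ 2 / z := by field_simp; ring
      have : 0 ≤ (z - 1) ^ 2 / z := by positivity
      linarith
    have := exp_pos (2 * m)
    rw [abs_le]
    constructor <;> nlinarith
  have hc : exp (2 * m) * J1 ^ 2 ≤ 2 * π * (exp (2 * ww P Q t) * bb P Q t) := by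
    have := cs (f := fun θ => exp m * pdR Q t θ) (by fun_prop)
      (c := √(2 * π * (exp (2 * ww P Q t) * bb P Q t))) (sqrt_nonneg _) ?_
    · have e : ∫ θ in (0:ℝ)..(2 * π), |exp m * pdR Q t θ| = exp m * J1 := by
        simp only [abs_mul, abs_exp]
        rw [intervalIntegral.integral_const_mul]
      rw [e] at this
      have hj : 0 ≤ J1 := (abs_nonneg _).trans hJJ
      have := pow_le_pow_left₀ (by positivity) this 2
      rw [sq_sqrt (by positivity), mul_pow, ← exp_two] at this
      exact this
    · rw [sq_sqrt (by positivity)]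
      gcongr
      rw [bb, II, ← intervalIntegral.integral_const_mul]
      apply intervalIntegral.integral_mono_on (by positivity)
          (Continuous.intervalIntegrable (by fun_prop) _ _)
          (Continuous.intervalIntegrable (by fun_prop) _ _)
      intro θ hθ
      have h1 := abs_le.1 (oscP s t hθ h0)
      rw [hm] at h1
      rw [mul_pow, ← mul_assoc, ← exp_two, ← exp_add]
      gcongr
      linarith
  set Z := II (fun t θ => exp (2 * P t θ) * pdR Q t θ) t with hZ
  have h3 : -(J * Z) ≤ (exp (2 * ww P Q t) - 1) * (exp (2 * m) * J1 ^ 2) := by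
    have a1 : -(J * Z) = - exp (2 * m) * J ^ 2 - J * (Z - exp (2 * m) * J) := by ring
    have a2 : |J * (Z - exp (2 * m) * J)| ≤ J1 * ((exp (2 * ww P Q t) - 1) * exp (2 * m) * J1) := by
      rw [abs_mul]
      exact mul_le_mul hJJ hr (abs_nonneg _) ((abs_nonneg _).trans hJJ)
    have a3 := (abs_le.1 a2).1
    have a4 : 0 ≤ exp (2 * m) * J ^ 2 := by positivity
    rw [a1]; linarith
  rw [← neg_div, div_le_iff₀ (by positivity)]
  refine h3.trans ((mul_le_mul_of_nonneg_left hc hE).trans (le_of_eq (by ring)))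

lemma anti {f f' : ℝ → ℝ} {a : ℝ} (h : ∀ t, a ≤ t → HasDerivAt f (f' t) t)
    (hn : ∀ t, a ≤ t → f' t ≤ 0) {t : ℝ} (ht : a ≤ t) : f t ≤ f a := by
  have : AntitoneOn f (Ici a) := by
    apply antitoneOn_of_deriv_nonpos (convex_Ici a)
    · exact fun x hx => (h x hx).continuousAt.continuousWithinAt
    · intro x hx
      rw [interior_Ici] at hx
      exact (h x (le_of_lt hx)).differentiableAt.differentiableWithinAt
    · intro x hx
      rw [interior_Ici] at hx
      rw [(h x (le_of_lt hx)).deriv]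
      exact hn x (le_of_lt hx)
  exact this self_mem_Ici ht ht

lemma compare {f f' B B' : ℝ → ℝ} {a : ℝ} (h : ∀ t, a ≤ t → HasDerivAt f (f' t) t)
    (hB : ∀ t, a ≤ t → HasDerivAt B (B' t) t)
    (hn : ∀ t, a ≤ t → |f' t| ≤ B' t) {t : ℝ} (ht : a ≤ t) : |f t - f a| ≤ B t - B a := by
  have h1 := anti (fun t ht => (h t ht).sub (hB t ht))
    (fun t ht => by have := abs_le.1 (hn t ht); linarith) ht
  have h2 := anti (fun t ht => ((h t ht).neg).sub (hB t ht))
    (fun t ht => by have := abs_le.1 (hn t ht); linarith) ht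
  simp only [Pi.sub_apply, Pi.neg_apply] at h1 h2
  rw [abs_le]; constructor <;> linarith

lemma ode {H D D' : ℝ → ℝ} {a l δ C H0 : ℝ} (hl : 0 < l) (hδ : 0 < δ) (hC : 0 ≤ C)
    (hH : ∀ t, a ≤ t → 0 ≤ H t) (hH0 : ∀ t, a ≤ t → H t ≤ H0)
    (hD : ∀ t, a ≤ t → HasDerivAt D (D' t) t)
    (h1 : ∀ t, a ≤ t → |D t - H t| ≤ C * exp (-δ * t) * H t)
    (h2 : ∀ t, a ≤ t → D' t ≤ -l * H t + C * exp (-δ * t) * H t) :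
    ∃ B, 0 < B ∧ ∀ t, a ≤ t → H t ≤ B * exp (-l * t) := by
  obtain ⟨b, hab, hb⟩ : ∃ b, a ≤ b ∧ ∀ t, b ≤ t → C * exp (-δ * t) ≤ 1 / 2 := by
    have : Filter.Tendsto (fun t : ℝ => C * exp (-δ * t)) Filter.atTop (nhds (C * 0)) := by
      apply Filter.Tendsto.const_mul
      apply tendsto_exp_atBot.comp
      exact Filter.tendsto_id.const_mul_atTop_of_neg (by linarith)
    rw [mul_zero] at this
    have h := (this.eventually (ge_mem_nhds (by norm_num : (0:ℝ) < 1 / 2)))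
    obtain ⟨c, hc⟩ := Filter.eventually_atTop.1 h
    exact ⟨max a c, le_max_left _ _, fun t ht => hc t ((le_max_right _ _).trans ht)⟩
  set κ := 2 * (l + 1) * C / δ with hκ
  have hκ0 : 0 ≤ κ := by positivity
  have hHD : ∀ t, b ≤ t → H t ≤ 2 * D t := by
    intro t ht
    have x1 := abs_le.1 (h1 t (hab.trans ht))
    have x2 := mul_le_mul_of_nonneg_right (hb t ht) (hH t (hab.trans ht))
    linarith
  have hd : ∀ t, b ≤ t → HasDerivAt (fun t => D t * exp (l * t + κ * exp (-δ * t)))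
      (D' t * exp (l * t + κ * exp (-δ * t)) + D t * (exp (l * t + κ * exp (-δ * t)) *
        (l * 1 + κ * (exp (-δ * t) * (-δ * 1))))) t := by
    intro t ht
    exact (hD t (hab.trans ht)).mul ((((hasDerivAt_id t).const_mul l).add
      ((((hasDerivAt_id t).const_mul (-δ)).exp).const_mul κ)).exp)
  have hmono := fun t ht => anti (t := t) hd (by
    intro t ht
    have x1 := abs_le.1 (h1 t (hab.trans ht))
    have x2 := h2 t (hab.trans ht)
    have x3 := hHD t ht
    have x4 : D' t + D t * (l - κ * δ * exp (-δ * t)) ≤ 0 := by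
      have : κ * δ = 2 * (l + 1) * C := by rw [hκ]; field_simp
      rw [this]
      have y : 0 ≤ C * exp (-δ * t) := by positivity
      have : D t * (l - 2 * (l + 1) * C * exp (-δ * t)) = l * D t - (l+1) * (C * exp (-δ * t)) * (2 * D t) := by ring
      rw [this]
      generalize C * exp (-δ * t) = e at *
      have z1 := mul_le_mul_of_nonneg_left x1.2 hl.le
      have z2 := mul_le_mul_of_nonneg_left x3 (by positivity : 0 ≤ (l + 1) * e)
      nlinarith
    calc _ = (D' t + D t * (l - κ * δ * exp (-δ * t))) * exp (l * t + κ * exp (-δ * t)) := by ring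
      _ ≤ 0 := mul_nonpos_of_nonpos_of_nonneg x4 (exp_pos _).le) ht
  set Φ := D b * exp (l * b + κ * exp (-δ * b)) with hΦ
  refine ⟨2 * |Φ| + |H0| * exp (l * b) + 1, by positivity, fun t ht => ?_⟩
  have hE : exp (l * t) * exp (-l * t) = 1 := by rw [← exp_add]; simp
  rcases le_total b t with hbt | hbt
  · have m := hmono t hbt
    have d0 : 0 ≤ D t := by have := hHD t hbt; have := hH t ht; linarith
    have m2 : D t * exp (l * t) ≤ |Φ| := by
      refine le_trans ?_ (m.trans (le_abs_self _))
      gcongr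
      have : 0 ≤ κ * exp (-δ * t) := by positivity
      linarith
    have m3 : D t ≤ |Φ| * exp (-l * t) := by
      calc D t = D t * exp (l * t) * exp (-l * t) := by rw [mul_assoc, hE, mul_one]
        _ ≤ _ := by gcongr
    have : 0 ≤ (|H0| * exp (l * b) + 1) * exp (-l * t) := by positivity
    have := hHD t hbt
    nlinarith
  · have : H t ≤ |H0| * exp (l * b) * exp (-l * t) := by
      rw [mul_assoc, ← exp_add]
      have g : 1 ≤ exp (l * b + -l * t) := one_le_exp (by nlinarith)
      have := (hH0 t ht).trans (le_abs_self _)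
      nlinarith [abs_nonneg H0]
    have : 0 ≤ (2 * |Φ| + 1) * exp (-l * t) := by positivity
    nlinarith

section
variable {P Q : ℝ → ℝ → ℝ} {t0 : ℝ}

lemma H_le (s : Sol P Q t0) {t : ℝ} (ht : t0 ≤ t) : HH P Q t ≤ HH P Q t0 := by
  refine anti (fun t ht => derivH s ht) (fun t ht => ?_) ht
  have := aa_nn P t
  have := bb_nn P Q t
  have : 0 ≤ exp (-2 * t) * (aa P t + bb P Q t) := by positivity
  linarith

lemma w_le (s : Sol P Q t0) {t : ℝ} (ht : t0 ≤ t) : ww P Q t ≤ ww P Q t0 := by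
  unfold ww
  gcongr
  exact H_le s ht

noncomputable def chi (w : ℝ) : ℝ := exp (2 * w) * (exp (2 * w) - 1)

noncomputable def DD (P Q : ℝ → ℝ → ℝ) (ε M t : ℝ) : ℝ :=
  HH P Q t + ε * (exp (-2 * t) * (G1 P t + M * G2 P Q t))

lemma D_near (s : Sol P Q t0) {ε M : ℝ} (hε : 0 ≤ ε) (hM : 0 ≤ M) {t : ℝ} (ht : t0 ≤ t) :
    ε * (exp (-2 * t) * |G1 P t + M * G2 P Q t|)
      ≤ ε * (1 + M * exp (ww P Q t0)) * (2 * π) * exp (-t) * HH P Q t := by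
  have hw : exp (ww P Q t) ≤ exp (ww P Q t0) := exp_le_exp.2 (w_le s ht)
  have h1 := G1_bd s t
  have h2 := G2_bd s t
  have hH := HH_nn P Q t
  have h3 : |G1 P t + M * G2 P Q t| ≤ (1 + M * exp (ww P Q t0)) * (exp t * (2 * π * HH P Q t)) := by
    calc _ ≤ |G1 P t| + M * |G2 P Q t| := by
          refine (abs_add_le _ _).trans ?_
          rw [abs_mul, abs_of_nonneg hM]
      _ ≤ exp t * (2 * π * HH P Q t) + M * (exp (ww P Q t0) * (exp t * (2 * π * HH P Q t))) := by
          gcongr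
          exact h2.trans (by gcongr)
      _ = _ := by ring
  have hE : exp (-2 * t) * exp t = exp (-t) := by rw [← exp_add]; ring_nf
  calc _ ≤ ε * (exp (-2 * t) * ((1 + M * exp (ww P Q t0)) * (exp t * (2 * π * HH P Q t)))) := by gcongr
    _ = ε * (1 + M * exp (ww P Q t0)) * (2 * π) * (exp (-2 * t) * exp t) * HH P Q t := by ring
    _ = _ := by rw [hE]

lemma D_deriv (s : Sol P Q t0) {ε M : ℝ} (hε : 0 ≤ ε) (hM : 0 ≤ M) {t : ℝ} (ht : t0 ≤ t) :
    ∃ D', HasDerivAt (DD P Q ε M) D' t ∧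
      D' ≤ -2 * (exp (-2 * t) * (aa P t + bb P Q t))
        + ε * (exp (-2 * t) * aa P t - cc P t + ww P Q t * (exp (-2 * t) * bb P Q t + dd P Q t)
          + M * ((1 + chi (ww P Q t)) * (exp (-2 * t) * bb P Q t) - dd P Q t))
        + 2 * (ε * (1 + M * exp (ww P Q t0)) * (2 * π)) * exp (-t) * HH P Q t := by
  have he : HasDerivAt (fun t : ℝ => exp (-2 * t)) (exp (-2 * t) * (-2 * 1)) t :=
    ((hasDerivAt_id t).const_mul (-2)).exp
  have h := (derivH s ht).add ((he.mul ((derivG1 s ht).add ((derivG2 s ht).const_mul M))).const_mul ε)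
  refine ⟨_, h, ?_⟩
  have e1 := G1_err s t
  have e2 := G2_err s t
  have n := D_near s hε hM ht
  have e3 : 0 ≤ II (pdR P) t ^ 2 / (2 * π) := by positivity
  have hE : exp (-2 * t) * exp (2 * t) = 1 := by rw [← exp_add]; simp
  simp only [Pi.add_apply]
  have n1 : ε * (exp (-2 * t) * -(G1 P t + M * G2 P Q t))
      ≤ ε * (1 + M * exp (ww P Q t0)) * (2 * π) * exp (-t) * HH P Q t := by
    refine le_trans ?_ n
    gcongr
    exact neg_le_abs _
  set I1 := II (fun t θ => (P t θ - II P t / (2 * π)) *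
        (exp (2 * P t θ) * (pdR Q t θ ^ 2 - exp (2 * t) * pdT Q t θ ^ 2))) t
  set I2 := II (pdR Q) t * II (fun t θ => exp (2 * P t θ) * pdR Q t θ) t / (2 * π)
  have main : ε * (exp (-2 * t) * ((aa P t - II (pdR P) t ^ 2 / (2 * π) - exp (2 * t) * cc P t + I1)
       + M * (bb P Q t - I2 - exp (2 * t) * dd P Q t)))
     ≤ ε * (exp (-2 * t) * ((aa P t - exp (2 * t) * cc P t + ww P Q t * (bb P Q t + exp (2 * t) * dd P Q t))
       + M * (bb P Q t + chi (ww P Q t) * bb P Q t - exp (2 * t) * dd P Q t))) := by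
    unfold chi
    gcongr <;> linarith
  have e4 : ε * (exp (-2 * t) * ((aa P t - exp (2 * t) * cc P t + ww P Q t * (bb P Q t + exp (2 * t) * dd P Q t))
       + M * (bb P Q t + chi (ww P Q t) * bb P Q t - exp (2 * t) * dd P Q t)))
     = ε * (exp (-2 * t) * aa P t - cc P t + ww P Q t * (exp (-2 * t) * bb P Q t + dd P Q t)
          + M * ((1 + chi (ww P Q t)) * (exp (-2 * t) * bb P Q t) - dd P Q t)) := by
    linear_combination (ε * (- cc P t + ww P Q t * dd P Q t - M * dd P Q t)) * hE
  rw [e4] at main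
  linarith

lemma chi_mono {x y : ℝ} (hx : 0 ≤ x) (h : x ≤ y) : chi x ≤ chi y := by
  unfold chi
  have h1 : 1 ≤ exp (2 * x) := one_le_exp (by linarith)
  have h2 : exp (2 * x) ≤ exp (2 * y) := exp_le_exp.2 (by linarith)
  nlinarith

lemma chi_nn {x : ℝ} (hx : 0 ≤ x) : 0 ≤ chi x := by
  unfold chi
  have h1 : 1 ≤ exp (2 * x) := one_le_exp (by linarith)
  nlinarith

lemma chi_lin {x y : ℝ} (hx : 0 ≤ x) (h : x ≤ y) : chi x ≤ 2 * exp (2 * y) ^ 2 * x := by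
  unfold chi
  have h1 : 1 ≤ exp (2 * x) := one_le_exp (by linarith)
  have h2 : exp (2 * x) ≤ exp (2 * y) := exp_le_exp.2 (by linarith)
  have h3 : exp (2 * x) - 1 ≤ 2 * x * exp (2 * x) := by
    have := one_sub_le_exp_neg (2 * x)
    have e : exp (2 * x) * exp (-(2 * x)) = 1 := by rw [← exp_add]; simp
    nlinarith
  calc _ ≤ exp (2 * x) * (2 * x * exp (2 * x)) := by gcongr
    _ = 2 * exp (2 * x) ^ 2 * x := by ring
    _ ≤ _ := by gcongr

lemma step1 (s : Sol P Q t0) : ∃ ε B, 0 < ε ∧ ε ≤ 1 ∧ 0 < B ∧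
    ∀ t, t0 ≤ t → HH P Q t ≤ B * exp (-ε * t) := by
  set w0 := ww P Q t0 with hw0
  have w0n : 0 ≤ w0 := ww_nn _ _ _
  have c0n : 0 ≤ chi w0 := chi_nn w0n
  set C := 1 + w0 + (1 + w0) * (1 + chi w0) with hC
  have hCp : 0 ≤ C := by positivity
  set ε := 1 / (C + 1) with hε
  have hεp : 0 < ε := by positivity
  have hεC : ε * (C + 1) = 1 := by rw [hε]; field_simp
  have hε1 : ε ≤ 1 := by nlinarith
  set N := ε * (1 + (1 + w0) * exp w0) * (2 * π) with hN
  have hNp : 0 ≤ N := by positivity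
  choose! D' hD' hDle using fun t (ht : t0 ≤ t) =>
    D_deriv s hεp.le (by positivity : 0 ≤ 1 + w0) ht
  have hode := ode (H := HH P Q) (D := DD P Q ε (1 + w0)) (D' := D') (a := t0) (l := ε)
    (δ := 1) (C := 2 * N) (H0 := HH P Q t0) hεp one_pos (by positivity) (fun t _ => HH_nn P Q t)
    (fun t ht => H_le s ht) hD' ?_ ?_
  · obtain ⟨B, hB, h⟩ := hode
    exact ⟨ε, B, hεp, hε1, hB, h⟩
  · intro t ht
    have n := D_near s hεp.le (by positivity : 0 ≤ 1 + w0) ht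
    have : DD P Q ε (1 + w0) t - HH P Q t
      = ε * (exp (-2 * t) * (G1 P t + (1 + w0) * G2 P Q t)) := by unfold DD; ring
    rw [this, abs_mul, abs_mul, abs_exp, abs_of_pos hεp]
    refine n.trans ?_
    rw [← hw0, ← hN, neg_one_mul]
    have := HH_nn P Q t
    gcongr
    linarith
  · intro t ht
    refine (hDle t ht).trans ?_
    rw [← hw0, ← hN, neg_one_mul]
    gcongr
    have hw := w_le s ht
    rw [← hw0] at hw
    have wn := ww_nn P Q t
    have hx := chi_mono wn hw
    generalize ww P Q t = w at *
    have e : HH P Q t = exp (-2 * t) * aa P t + exp (-2 * t) * bb P Q t + cc P t + dd P Q t := by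
      unfold HH; ring
    rw [e, mul_add]
    have a0 : 0 ≤ exp (-2 * t) * aa P t := mul_nonneg (exp_pos _).le (aa_nn _ _)
    have b0 : 0 ≤ exp (-2 * t) * bb P Q t := mul_nonneg (exp_pos _).le (bb_nn _ _ _)
    have d0 := dd_nn P Q t
    generalize exp (-2 * t) * aa P t = a at *
    generalize exp (-2 * t) * bb P Q t = b at *
    generalize cc P t = c at *
    generalize dd P Q t = d at *
    have k : a - c + w * (b + d) + (1 + w0) * ((1 + chi w) * b - d) ≤ C * (a + b) - c - d := by
      have k1 : w * (b + d) ≤ w0 * (b + d) := by gcongr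
      have k2 : (1 + w0) * ((1 + chi w) * b) ≤ (1 + w0) * ((1 + chi w0) * b) := by gcongr
      have k3 : 0 ≤ (w0 + (1 + w0) * (1 + chi w0)) * a := by positivity
      rw [hC]
      nlinarith
    have := mul_le_mul_of_nonneg_left k hεp.le
    have k5 : ε * (C * (a + b)) ≤ 1 * (a + b) - ε * (a + b) := by
      have : ε * C = 1 - ε := by linarith
      rw [← mul_assoc, this]; linarith
    have k6 : 0 ≤ (1 - ε) * (a + b) := mul_nonneg (by linarith) (by linarith)
    nlinarith

lemma step2 (s : Sol P Q t0) : ∃ B, 0 < B ∧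
    ∀ t, t0 ≤ t → HH P Q t ≤ B * exp (-1 * t) := by
  obtain ⟨ε, B, hεp, hε1, hB, hHB⟩ := step1 s
  set w0 := ww P Q t0 with hw0
  have w0n : 0 ≤ w0 := ww_nn _ _ _
  set N := 1 * (1 + 1 * exp w0) * (2 * π) with hN
  have hNp : 0 ≤ N := by positivity
  set δ := ε / 2 with hδ
  have hδp : 0 < δ := by positivity
  set E := exp (-(1 - δ) * t0) with hE
  set W := √(2 * π * B) with hW
  have hexp : ∀ t, t0 ≤ t → exp (-t) ≤ E * exp (-δ * t) := by
    intro t ht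
    rw [hE, ← exp_add]
    apply exp_le_exp.2
    nlinarith
  have hww : ∀ t, t0 ≤ t → ww P Q t ≤ W * exp (-δ * t) := by
    intro t ht
    unfold ww
    rw [hW]
    apply sqrt_le_iff.2
    refine ⟨by positivity, ?_⟩
    rw [mul_pow, sq_sqrt (by positivity), ← exp_two]
    have : exp (2 * (-δ * t)) = exp (-ε * t) := by rw [hδ]; ring_nf
    rw [this, mul_assoc (2 * π) B]
    exact mul_le_mul_of_nonneg_left (hHB t ht) (by positivity)
  choose! D' hD' hDle using fun t (ht : t0 ≤ t) =>
    D_deriv s (zero_le_one : (0:ℝ) ≤ 1) (zero_le_one : (0:ℝ) ≤ 1) ht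
  have hWn : 0 ≤ W := sqrt_nonneg _
  set K := 1 + 2 * exp (2 * w0) ^ 2 with hK
  have hKn : 0 ≤ K := by positivity
  have hEn : 0 ≤ E := (exp_pos _).le
  have hode := ode (H := HH P Q) (D := DD P Q 1 1) (D' := D') (a := t0) (l := 1)
    (δ := δ) (C := 2 * N * E + K * W) (H0 := HH P Q t0) one_pos hδp
    (by positivity) (fun t _ => HH_nn P Q t)
    (fun t ht => H_le s ht) hD' ?_ ?_
  · exact hode
  · intro t ht
    have n := D_near s (zero_le_one : (0:ℝ) ≤ 1) (zero_le_one : (0:ℝ) ≤ 1) ht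
    have : DD P Q 1 1 t - HH P Q t
      = 1 * (exp (-2 * t) * (G1 P t + 1 * G2 P Q t)) := by unfold DD; ring
    rw [this, abs_mul, abs_mul, abs_exp, abs_one]
    refine n.trans ?_
    rw [← hw0, ← hN]
    have := HH_nn P Q t
    refine mul_le_mul_of_nonneg_right ?_ this
    calc N * exp (-t) ≤ N * (E * exp (-δ * t)) := by gcongr; exact hexp t ht
      _ = N * E * exp (-δ * t) := by ring
      _ ≤ _ := by
        refine mul_le_mul_of_nonneg_right ?_ (exp_pos _).le
        have : 0 ≤ N * E := by positivity
        have : 0 ≤ K * W := by positivity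
        linarith
  · intro t ht
    refine (hDle t ht).trans ?_
    rw [← hw0, ← hN]
    have hH := HH_nn P Q t
    have t1 : 2 * N * exp (-t) * HH P Q t ≤ 2 * N * E * exp (-δ * t) * HH P Q t := by
      rw [mul_assoc (2 * N) E]
      gcongr
      exact hexp t ht
    have hw := w_le s ht
    rw [← hw0] at hw
    have wn := ww_nn P Q t
    have hx := chi_lin wn hw
    have hx0 := chi_nn wn
    have t2 : (ww P Q t + chi (ww P Q t)) * HH P Q t ≤ K * W * exp (-δ * t) * HH P Q t := by
      gcongr
      calc _ ≤ K * ww P Q t := by rw [hK]; linarith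
        _ ≤ K * (W * exp (-δ * t)) := by gcongr; exact hww t ht
        _ = _ := by ring
    have e : HH P Q t = exp (-2 * t) * aa P t + exp (-2 * t) * bb P Q t + cc P t + dd P Q t := by
      unfold HH; ring
    have t3 : -2 * (exp (-2 * t) * (aa P t + bb P Q t))
        + 1 * (exp (-2 * t) * aa P t - cc P t + ww P Q t * (exp (-2 * t) * bb P Q t + dd P Q t)
          + 1 * ((1 + chi (ww P Q t)) * (exp (-2 * t) * bb P Q t) - dd P Q t))
        ≤ -1 * HH P Q t + (ww P Q t + chi (ww P Q t)) * HH P Q t := by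
      rw [e, mul_add (exp (-2 * t))]
      have a0 : 0 ≤ exp (-2 * t) * aa P t := mul_nonneg (exp_pos _).le (aa_nn _ _)
      have b0 : 0 ≤ exp (-2 * t) * bb P Q t := mul_nonneg (exp_pos _).le (bb_nn _ _ _)
      have c0 := cc_nn P t
      have d0 := dd_nn P Q t
      generalize exp (-2 * t) * aa P t = a at *
      generalize exp (-2 * t) * bb P Q t = b at *
      generalize cc P t = c at *
      generalize dd P Q t = d at *
      generalize chi (ww P Q t) = x at *
      generalize ww P Q t = w at *
      have : 0 ≤ w * (a + c) := by positivity
      have : 0 ≤ x * (a + c + d) := by positivity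
      nlinarith
    linarith

lemma step3 (s : Sol P Q t0) : ∃ C, 0 < C ∧ ∀ t, t0 ≤ t → ∀ θ,
    |Q t θ| * exp (P t θ) * exp t ≤ C * exp (C * exp (t / 2)) := by
  obtain ⟨B, hB, hHB⟩ := step2 s
  have hpi := Real.pi_pos
  have hpi3 := Real.pi_gt_three
  set w0 := ww P Q t0 with hw0
  have w0n : 0 ≤ w0 := ww_nn _ _ _
  set W := √(2 * π * B) with hW
  have hWn : 0 ≤ W := sqrt_nonneg _
  have hww : ∀ t, t0 ≤ t → exp t * ww P Q t ≤ W * exp (t / 2) := by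
    intro t ht
    have : ww P Q t ≤ W * exp (-(t / 2)) := by
      unfold ww
      rw [hW]
      apply sqrt_le_iff.2
      refine ⟨by positivity, ?_⟩
      rw [mul_pow, sq_sqrt (by positivity), ← exp_two]
      have : exp (2 * (-(t / 2))) = exp (-1 * t) := by ring_nf
      rw [this, mul_assoc (2 * π) B]
      exact mul_le_mul_of_nonneg_left (hHB t ht) (by positivity)
    calc _ ≤ exp t * (W * exp (-(t / 2))) := by gcongr
      _ = W * (exp t * exp (-(t / 2))) := by ring
      _ = _ := by rw [← exp_add]; ring_nf
  have hX : ∀ t : ℝ, HasDerivAt (fun t => exp (t / 2)) (exp (t / 2) * (1 / 2)) t := fun t =>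
    ((hasDerivAt_id t).div_const 2).exp
  -- mean of P
  have hp : ∀ t, t0 ≤ t → |II P t / (2 * π)| ≤ |II P t0 / (2 * π)| + 2 * W * exp (t / 2) := by
    intro t ht
    have := compare (a := t0) (f := fun t => II P t / (2 * π)) (B := fun t => 2 * W * exp (t / 2))
      (fun t _ => (hasII s.sP t).div_const (2 * π)) (fun t _ => (hX t).const_mul (2 * W)) ?_ ht
    · have h2 := abs_sub_abs_le_abs_sub (II P t / (2 * π)) (II P t0 / (2 * π))
      have : 0 ≤ 2 * W * exp (t0 / 2) := by positivity
      linarith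
    · intro t ht
      rw [abs_div, abs_of_pos (by positivity : 0 < 2 * π), div_le_iff₀ (by positivity)]
      have h1 : |II (pdR P) t| ≤ exp t * ww P Q t :=
        (intervalIntegral.abs_integral_le_integral_abs (by positivity)).trans (int_Pt s t)
      have h2 := hww t ht
      have : 0 ≤ W * exp (t / 2) := by positivity
      nlinarith
  set c1 := |II P t0 / (2 * π)| + w0 with hc1
  have hP : ∀ t, t0 ≤ t → ∀ θ ∈ Icc 0 (2 * π), |P t θ| ≤ c1 + 2 * W * exp (t / 2) := by
    intro t ht θ hθ
    have h1 := meanP s t hθ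
    have h2 := hp t ht
    have h3 := w_le s ht
    have h4 := abs_sub_abs_le_abs_sub (P t θ) (II P t / (2 * π))
    rw [hc1]; linarith
  have hq : ∀ t, t0 ≤ t → |II Q t / (2 * π)|
      ≤ |II Q t0 / (2 * π)| + exp c1 * exp (2 * W * exp (t / 2)) := by
    intro t ht
    have := compare (a := t0) (f := fun t => II Q t / (2 * π))
      (B := fun t => exp c1 * exp (2 * W * exp (t / 2)))
      (fun t _ => (hasII s.sQ t).div_const (2 * π))
      (fun t _ => (((hX t).const_mul (2 * W)).exp).const_mul (exp c1)) ?_ ht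
    · have h2 := abs_sub_abs_le_abs_sub (II Q t / (2 * π)) (II Q t0 / (2 * π))
      have : 0 ≤ exp c1 * exp (2 * W * exp (t0 / 2)) := by positivity
      linarith
    · intro t ht
      rw [abs_div, abs_of_pos (by positivity : 0 < 2 * π), div_le_iff₀ (by positivity)]
      have cP := contT s.sP t
      have cQ := contT (smR s.sQ) t
      have h1 : |II (pdR Q) t| ≤ exp (c1 + 2 * W * exp (t / 2)) * (exp t * ww P Q t) := by
        calc |II (pdR Q) t| ≤ ∫ θ in (0:ℝ)..(2 * π), |pdR Q t θ| :=
              intervalIntegral.abs_integral_le_integral_abs (by positivity)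
          _ ≤ ∫ θ in (0:ℝ)..(2 * π), exp (c1 + 2 * W * exp (t / 2)) * (exp (P t θ) * |pdR Q t θ|) := by
              apply intervalIntegral.integral_mono_on (by positivity)
                (Continuous.intervalIntegrable (by fun_prop) _ _)
                (Continuous.intervalIntegrable (by fun_prop) _ _)
              intro θ hθ
              rw [← mul_assoc, ← exp_add]
              apply le_mul_of_one_le_left (abs_nonneg _)
              apply one_le_exp
              have := (abs_le.1 (hP t ht θ hθ)).1
              linarith
          _ = exp (c1 + 2 * W * exp (t / 2)) * ∫ θ in (0:ℝ)..(2 * π), (exp (P t θ) * |pdR Q t θ|) := by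
              rw [intervalIntegral.integral_const_mul]
          _ ≤ _ := by gcongr; exact int_Qt s t
      have h2 : |II (pdR Q) t| ≤ exp c1 * exp (2 * W * exp (t / 2)) * (W * exp (t / 2)) := by
        rw [← exp_add]
        exact h1.trans (mul_le_mul_of_nonneg_left (hww t ht) (exp_pos _).le)
      have : 0 ≤ exp c1 * exp (2 * W * exp (t / 2)) * (W * exp (t / 2)) := by positivity
      calc _ ≤ _ := h2
        _ ≤ exp c1 * exp (2 * W * exp (t / 2)) * (W * exp (t / 2)) * (2 * π) := by nlinarith
        _ = _ := by ring
  set q0 := |II Q t0 / (2 * π)| with hq0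
  have q0n : 0 ≤ q0 := abs_nonneg _
  set C0 := exp w0 * w0 + q0 * exp c1 + exp c1 * exp c1 with hC0
  have C0p : 0 < C0 := by positivity
  refine ⟨C0 + 4 * W + 2, by positivity, ?_⟩
  intro t ht
  have main : ∀ θ ∈ Icc 0 (2 * π),
      |Q t θ| * exp (P t θ) * exp t ≤ (C0 + 4 * W + 2) * exp ((C0 + 4 * W + 2) * exp (t / 2)) := by
    intro θ hθ
    set X := exp (t / 2) with hXd
    have Xp : 0 < X := exp_pos _
    have hXX : exp t ≤ exp (2 * X) := by
      apply exp_le_exp.2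
      have := add_one_le_exp (t / 2)
      linarith
    set Y := exp (2 * W * X) with hY
    have hY1 : 1 ≤ Y := one_le_exp (by positivity)
    have m1 := meanQ s t hθ hθ
    have m2 : exp (ww P Q t) * ww P Q t ≤ exp w0 * w0 := by
      have := w_le s ht
      have := ww_nn P Q t
      gcongr
    have m3 := hq t ht
    have m4 : exp (P t θ) ≤ exp c1 * Y := by
      rw [hY, ← exp_add]
      exact exp_le_exp.2 ((le_abs_self _).trans (hP t ht θ hθ))
    have m5 : |Q t θ| ≤ |Q t θ - II Q t / (2 * π)| + |II Q t / (2 * π)| := by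
      have := abs_sub_abs_le_abs_sub (Q t θ) (II Q t / (2 * π)); linarith
    have m6 : |Q t θ| * exp (P t θ) ≤ C0 * (Y * Y) := by
      calc _ ≤ (|Q t θ - II Q t / (2 * π)| + |II Q t / (2 * π)|) * exp (P t θ) := by gcongr
        _ = |Q t θ - II Q t / (2 * π)| * exp (P t θ) + |II Q t / (2 * π)| * exp (P t θ) := by ring
        _ ≤ exp w0 * w0 + (q0 + exp c1 * Y) * (exp c1 * Y) := by
            refine add_le_add (m1.trans m2) ?_
            gcongr
        _ ≤ C0 * (Y * Y) := by
            rw [hC0]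
            have z1 : 1 ≤ Y * Y := by nlinarith
            have z2 : Y ≤ Y * Y := by nlinarith
            have z3 := mul_le_mul_of_nonneg_left z1 (by positivity : 0 ≤ exp w0 * w0)
            have z4 := mul_le_mul_of_nonneg_left z2 (by positivity : 0 ≤ q0 * exp c1)
            nlinarith
    calc _ ≤ C0 * (Y * Y) * exp (2 * X) := by gcongr
      _ = C0 * exp ((4 * W + 2) * X) := by
          rw [hY, mul_assoc, ← exp_add, ← exp_add]; ring_nf
      _ ≤ _ := by
          gcongr <;> linarith
  intro θ
  have per : Function.Periodic (fun θ => |Q t θ| * exp (P t θ) * exp t) (2 * π) := by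
    intro θ; simp only [s.pP, s.pQ]
  obtain ⟨y, hy, hy2⟩ := per.exists_mem_Ico₀ (by positivity) θ
  rw [hy2]
  exact main y ⟨hy.1, hy.2.le⟩
end

lemma mkSol (R₀ : ℝ) (hR₀ : 0 < R₀)
    (U A : ℝ → ℝ → ℝ)
    (hU : Sm U) (hA : Sm A)
    (hUper : ∀ R θ, U R (θ + 2 * π) = U R θ)
    (hAper : ∀ R θ, A R (θ + 2 * π) = A R θ)
    (eqU : ∀ R, R₀ ≤ R → ∀ θ : ℝ,
      deriv (fun r => r * pdR U r θ) R - deriv (fun t => R * pdT U R t) θ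
        = exp (4 * U R θ) / (2 * R) * ((pdR A R θ) ^ 2 - (pdT A R θ) ^ 2))
    (eqA : ∀ R, R₀ ≤ R → ∀ θ : ℝ,
      deriv (fun r => r⁻¹ * pdR A r θ) R - deriv (fun t => R⁻¹ * pdT A R t) θ
        = 4 / R * (-(pdR U R θ * pdR A R θ) + pdT U R θ * pdT A R θ)) :
    Sol (fun t θ => 2 * U (exp t) θ - t) (fun t θ => A (exp t) θ) (log R₀) := by
  have pR : ∀ f : ℝ → ℝ → ℝ, Sm f → ∀ t θ, HasDerivAt (fun t => f (exp t) θ)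
      (pdR f (exp t) θ * exp t) t := fun f hf t θ =>
    HasDerivAt.comp t (hasR hf (exp t) θ) (Real.hasDerivAt_exp t)
  have P1 : pdR (fun t θ => 2 * U (exp t) θ - t) = fun t θ => 2 * (pdR U (exp t) θ * exp t) - 1 := by
    funext t θ
    exact (((pR U hU t θ).const_mul 2).sub (hasDerivAt_id t)).deriv
  have Q1 : pdR (fun t θ => A (exp t) θ) = fun t θ => (pdR A (exp t) θ * exp t) := by
    funext t θ
    exact (pR A hA t θ).deriv
  have P2 : ∀ t θ, pdR (pdR (fun t θ => 2 * U (exp t) θ - t)) t θ =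
      2 * (pdR (pdR U) (exp t) θ * exp t * exp t + pdR U (exp t) θ * exp t) := by
    intro t θ
    rw [P1]
    exact ((((pR _ (smR hU) t θ).mul (Real.hasDerivAt_exp t)).const_mul 2).sub_const 1).deriv
  have Q2 : ∀ t θ, pdR (pdR (fun t θ => A (exp t) θ)) t θ =
      (pdR (pdR A) (exp t) θ * exp t * exp t + pdR A (exp t) θ * exp t) := by
    intro t θ
    rw [Q1]
    exact (((pR _ (smR hA) t θ).mul (Real.hasDerivAt_exp t))).deriv
  have P3 : pdT (fun t θ => 2 * U (exp t) θ - t) = fun t θ => 2 * pdT U (exp t) θ := by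
    funext t θ
    exact (((hasT hU (exp t) θ).const_mul 2).sub_const t).deriv
  have Q3 : pdT (fun t θ => A (exp t) θ) = fun t θ => pdT A (exp t) θ := rfl
  have P4 : ∀ t θ, pdT (pdT (fun t θ => 2 * U (exp t) θ - t)) t θ = 2 * pdT (pdT U) (exp t) θ := by
    intro t θ
    rw [P3]
    exact ((hasT (smT hU) (exp t) θ).const_mul 2).deriv
  have Q4 : ∀ t θ, pdT (pdT (fun t θ => A (exp t) θ)) t θ = pdT (pdT A) (exp t) θ := fun _ _ => rfl
  have hRt : ∀ t, log R₀ ≤ t → R₀ ≤ exp t := fun t ht => (log_le_iff_le_exp hR₀).1 ht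
  constructor
  · exact sm_of (by
      have h : ContDiff ℝ (⊤ : ℕ∞) (fun x : ℝ × ℝ => U (exp x.1) x.2) :=
        hU.comp (g := Function.uncurry U) (f := fun x : ℝ × ℝ => (exp x.1, x.2)) (by fun_prop)
      fun_prop)
  · exact sm_of (hA.comp (g := Function.uncurry A) (f := fun x : ℝ × ℝ => (exp x.1, x.2)) (by fun_prop))
  · intro R θ; simp only [hUper]
  · intro R θ; simp only [hAper]
  · intro t ht θ
    rw [P2, P4, Q1, Q3]
    have h := eqU (exp t) (hRt t ht) θ
    have d1 : deriv (fun r => r * pdR U r θ) (exp t) = _ :=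
      ((hasDerivAt_id (exp t)).mul (hasR (smR hU) (exp t) θ)).deriv
    have d2 : deriv (fun x => exp t * pdT U (exp t) x) θ = _ :=
      ((hasT (smT hU) (exp t) θ).const_mul (exp t)).deriv
    rw [d1, d2] at h
    simp only [id] at h
    have e : exp (2 * (2 * U (exp t) θ - t)) = exp (4 * U (exp t) θ) / exp t ^ 2 := by
      rw [← exp_two, ← exp_sub]; ring_nf
    simp only [e, exp_two]
    have hp : exp t ≠ 0 := (exp_pos t).ne'
    generalize exp t = r at *
    field_simp at h ⊢
    linear_combination h
  · intro t ht θ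
    rw [Q2, Q4, P3, Q1, Q3, P1]
    have h := eqA (exp t) (hRt t ht) θ
    have hp : exp t ≠ 0 := (exp_pos t).ne'
    have d1 : deriv (fun r => r⁻¹ * pdR A r θ) (exp t) = _ :=
      ((hasDerivAt_inv hp).mul (hasR (smR hA) (exp t) θ)).deriv
    have d2 : deriv (fun x => (exp t)⁻¹ * pdT A (exp t) x) θ = _ :=
      ((hasT (smT hA) (exp t) θ).const_mul (exp t)⁻¹).deriv
    rw [d1, d2] at h
    simp only [exp_two]
    generalize exp t = r at *
    field_simp at h ⊢
    linear_combination h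

theorem stmt13
    (R₀ : ℝ) (hR₀ : 0 < R₀)
    (U A : ℝ → ℝ → ℝ)
    (hU : ContDiff ℝ (⊤ : ℕ∞) (Function.uncurry U))
    (hA : ContDiff ℝ (⊤ : ℕ∞) (Function.uncurry A))
    (hUper : ∀ R θ, U R (θ + 2 * π) = U R θ)
    (hAper : ∀ R θ, A R (θ + 2 * π) = A R θ)
    (eqU : ∀ R, R₀ ≤ R → ∀ θ : ℝ,
      deriv (fun r => r * pdR U r θ) R - deriv (fun t => R * pdT U R t) θ
        = exp (4 * U R θ) / (2 * R) * ((pdR A R θ) ^ 2 - (pdT A R θ) ^ 2))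
    (eqA : ∀ R, R₀ ≤ R → ∀ θ : ℝ,
      deriv (fun r => r⁻¹ * pdR A r θ) R - deriv (fun t => R⁻¹ * pdT A R t) θ
        = 4 / R * (-(pdR U R θ * pdR A R θ) + pdT U R θ * pdT A R θ))
 :
    ∃ C : ℝ, 0 < C ∧ ∀ R, R₀ ≤ R → ∀ θ : ℝ,
      |A R θ * exp (2 * U R θ)| ≤ C * exp (C * Real.sqrt R) := by
  obtain ⟨C, hC, h⟩ := step3 (mkSol R₀ hR₀ U A hU hA hUper hAper eqU eqA)
  refine ⟨C, hC, fun R hR θ => ?_⟩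
  have hRp : 0 < R := hR₀.trans_le hR
  have := h (log R) (log_le_log hR₀ hR) θ
  rw [exp_log hRp, mul_assoc, exp_half, exp_log hRp] at this
  rw [abs_mul, abs_exp]
  refine le_trans (le_of_eq ?_) this
  rw [exp_sub, exp_log hRp]
  field_simp
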